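/- arXiv:1003.5894 — 2 statements merged into one kernel-verified Lean document; each statement's English description precedes it below -/
import Mathlib

section
/- Let k be a field, r ≥ 1, and n₁,…,n_r positive integers with N = n₁ + ⋯ + n_r. Let L = k(x₁,…,x_N), let G = S_{n₁} × ⋯ × S_{n_r} act on L by permuting the variables in consecutive blocks of sizes n₁,…,n_r, and let K = L^G. For each i set m_i = n₁ + ⋯ + n_{i-1} + 1 and L_i = K(x_{m_i}) ⊆ L, and set s₁ = x₁ + ⋯ + x_N ∈ K. Let p be a prime, let 1 ≤ s ≤ r be such that p divides n₁,…,n_s, and let d₁,…,d_s be integers with d₁ not divisible by p. Then there do not exist elements a₁,…,a_r ∈ Kˣ and b₁ ∈ L₁ˣ, …, b_r ∈ L_rˣ such that a₁ = s₁ · N_{L₁/K}(b₁), a_i = N_{L_i/K}(b_i) for all 2 ≤ i ≤ r, and a₁^{d₁} ⋯ a_s^{d_s} ∈ (Kˣ)^p. -/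
/-- The starting index (0-based) of the `i`-th block of consecutive variables,
for blocks of sizes `n 0, n 1, …` (so block `i` starts at `n 0 + ⋯ + n (i-1)`). -/
def blockStart {r : ℕ} (n : Fin r → ℕ) (i : Fin r) : ℕ := ∑ j ∈ Finset.Iio i, n j

/-- The embedding of `S_{n 0} × ⋯ × S_{n (r-1)}` into the symmetric group of
`Fin N`, via a block decomposition `e : (Σ i, Fin (n i)) ≃ Fin N`: the `i`-th
factor permutes the `i`-th block of variables. -/
def blockPermHom {r : ℕ} (n : Fin r → ℕ) (N : ℕ) (e : ((i : Fin r) × Fin (n i)) ≃ Fin N) :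
    ((i : Fin r) → Equiv.Perm (Fin (n i))) →* Equiv.Perm (Fin N) where
  toFun g := (e.symm.trans (Equiv.sigmaCongrRight g)).trans e
  map_one' := by
    ext j
    simp
  map_mul' g h := by
    ext j
    rcases hj : e.symm j with ⟨i, x⟩
    simp [Equiv.Perm.mul_apply, hj]

open scoped WithZero

/-- A multiplicative map on `L` that is invariant under `Gal(L/K)` sends the norm of an
element `b` of an intermediate field `F` to the `[F : K]`-th power of the value of `b`. -/
theorem map_norm_intermediateField_eq_pow {K L Γ : Type*} [Field K] [Field L] [Algebra K L]
    [FiniteDimensional K L] [IsGalois K L] [LinearOrderedCommGroupWithZero Γ]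
    (w : L →*₀ Γ) (hw : ∀ (σ : L ≃ₐ[K] L) (x : L), w (σ x) = w x)
    (F : IntermediateField K L) (b : F) :
    w (algebraMap K L (Algebra.norm K b)) = w (b : L) ^ Module.finrank K F := by
  have h1 : algebraMap K L (Algebra.norm K (b : L)) = ∏ σ : L ≃ₐ[K] L, σ (b : L) :=
    Algebra.norm_eq_prod_automorphisms K (b : L)
  have h2 : Algebra.norm K (b : L) = Algebra.norm K b ^ Module.finrank F L := by
    rw [← Algebra.norm_norm (S := F), ← IntermediateField.algebraMap_apply F b,
      Algebra.norm_algebraMap, map_pow]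
  have h3 : w (algebraMap K L (Algebra.norm K b)) ^ Module.finrank F L =
      (w (b : L) ^ Module.finrank K F) ^ Module.finrank F L := by
    rw [← map_pow, ← map_pow, ← h2, h1, map_prod, Finset.prod_congr rfl fun σ _ => hw σ b,
      Finset.prod_const, ← pow_mul, Module.finrank_mul_finrank, Finset.card_univ,
      ← Nat.card_eq_fintype_card, IsGalois.card_aut_eq_finrank]
  exact (pow_left_inj₀ zero_le zero_le Module.finrank_pos.ne').1 h3

/-- The multiplicity of a prime element, as a multiplicative map to `ℤᵐ⁰`. -/
noncomputable def primeMultiplicityHom {R : Type*} [CommRing R] [IsDomain R] [WfDvdMonoid R]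
    {π : R} (hπ : Prime π) : R →*₀ ℤᵐ⁰ := by
  classical exact
  { toFun f := if f = 0 then 0 else WithZero.exp (multiplicity π f : ℤ)
    map_zero' := if_pos rfl
    map_one' := by
      rw [if_neg one_ne_zero, multiplicity_eq_zero.2 fun h => hπ.not_isUnit (isUnit_of_dvd_one h)]
      simp
    map_mul' f g := by
      rcases eq_or_ne f 0 with rfl | hf
      · simp
      rcases eq_or_ne g 0 with rfl | hg
      · simp
      rw [if_neg hf, if_neg hg, if_neg (mul_ne_zero hf hg), multiplicity_mul hπ
        (FiniteMultiplicity.of_prime_left hπ (mul_ne_zero hf hg)), ← WithZero.exp_add]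
      push_cast
      rfl }

theorem primeMultiplicityHom_apply {R : Type*} [CommRing R] [IsDomain R] [WfDvdMonoid R]
    {π : R} (hπ : Prime π) {f : R} (hf : f ≠ 0) :
    primeMultiplicityHom hπ f = WithZero.exp (multiplicity π f : ℤ) :=
  if_neg hf

theorem primeMultiplicityHom_self {R : Type*} [CommRing R] [IsDomain R] [WfDvdMonoid R]
    {π : R} (hπ : Prime π) : primeMultiplicityHom hπ π = WithZero.exp 1 := by
  rw [primeMultiplicityHom_apply hπ hπ.ne_zero, multiplicity_self, Nat.cast_one]

theorem primeMultiplicityHom_map {R : Type*} [CommRing R] [IsDomain R] [WfDvdMonoid R]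
    {π : R} (hπ : Prime π) (φ : R ≃+* R) (hφ : φ π = π) (f : R) :
    primeMultiplicityHom hπ (φ f) = primeMultiplicityHom hπ f := by
  rcases eq_or_ne f 0 with rfl | hf
  · simp
  rw [primeMultiplicityHom_apply hπ hf,
    primeMultiplicityHom_apply hπ ((map_ne_zero_iff φ φ.injective).2 hf)]
  congr 2
  nth_rewrite 1 [← hφ]
  exact multiplicity_map_eq φ

/-- The extension of the multiplicity of a prime element to the fraction field. -/
theorem exists_fractionRing_hom_extending_multiplicity {R : Type*} [CommRing R] [IsDomain R]
    [WfDvdMonoid R] {π : R} (hπ : Prime π) :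
    ∃ w : FractionRing R →*₀ ℤᵐ⁰,
      ∀ f : R, w (algebraMap R (FractionRing R) f) = primeMultiplicityHom hπ f := by
  have hu (y : nonZeroDivisors R) : IsUnit (primeMultiplicityHom hπ y) := by
    rw [primeMultiplicityHom_apply hπ (nonZeroDivisors.coe_ne_zero y)]
    exact WithZero.exp_ne_zero.isUnit
  exact ⟨(IsLocalization.toLocalizationMap (nonZeroDivisors R) (FractionRing R)).lift₀ _ hu,
    fun f => Submonoid.LocalizationMap.lift_eq _ hu f⟩

/-- The sum of a nonempty family of variables is a prime polynomial. -/
theorem MvPolynomial.prime_sum_X {σ k : Type*} [Fintype σ] [Nonempty σ] [Field k] :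
    Prime (∑ j : σ, MvPolynomial.X j : MvPolynomial σ k) := by
  classical
  have h : (∑ j : σ, X j : MvPolynomial σ k) =
      sumSMulX (Finsupp.equivFunOnFinite.symm fun _ => 1) := by
    rw [sumSMulX, Finsupp.linearCombination_apply, Finsupp.sum_fintype _ _ (by simp)]
    simp
  rw [h]
  refine (irreducible_sumSMulX _ ?_ ?_).prime
  · obtain ⟨j⟩ := ‹Nonempty σ›
    exact ⟨j, by simp⟩
  · intro r hr
    obtain ⟨j⟩ := ‹Nonempty σ›
    exact isUnit_of_dvd_one (by simpa using hr j)

/-- An automorphism of the field of rational functions permuting the variables preserves the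
extended multiplicity of a prime polynomial fixed by the permutation. -/
theorem map_perm_eq_of_prime {σ k : Type*} [Field k]
    {P : MvPolynomial σ k} (hP : Prime P) (w : FractionRing (MvPolynomial σ k) →*₀ ℤᵐ⁰)
    (hw : ∀ f, w (algebraMap _ _ f) = primeMultiplicityHom hP f) (π : Equiv.Perm σ)
    (hπ : MvPolynomial.rename π P = P)
    (τ : FractionRing (MvPolynomial σ k) ≃ₐ[k] FractionRing (MvPolynomial σ k))
    (hτ : ∀ j, τ (algebraMap (MvPolynomial σ k) _ (MvPolynomial.X j)) =
      algebraMap (MvPolynomial σ k) _ (MvPolynomial.X (π j)))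
    (x : FractionRing (MvPolynomial σ k)) : w (τ x) = w x := by
  have key (f : MvPolynomial σ k) :
      τ (algebraMap _ _ f) = algebraMap _ _ (MvPolynomial.rename π f) := by
    have h : (τ : _ →ₐ[k] _).comp
          (IsScalarTower.toAlgHom k (MvPolynomial σ k) (FractionRing (MvPolynomial σ k))) =
        (IsScalarTower.toAlgHom k (MvPolynomial σ k) (FractionRing (MvPolynomial σ k))).comp
          (MvPolynomial.rename π) := by
      ext j
      simp [hτ]
    exact DFunLike.congr_fun h f
  have hpoly (f : MvPolynomial σ k) : w (τ (algebraMap _ _ f)) = w (algebraMap _ _ f) := by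
    rw [key, hw, hw]
    exact primeMultiplicityHom_map hP (MvPolynomial.renameEquiv k π).toRingEquiv hπ f
  obtain ⟨f, g, -, rfl⟩ := IsFractionRing.div_surjective (A := MvPolynomial σ k) x
  rw [map_div₀, map_div₀, map_div₀, hpoly, hpoly]

theorem blockPermHom_apply {r : ℕ} (n : Fin r → ℕ) (N : ℕ) (e : ((i : Fin r) × Fin (n i)) ≃ Fin N)
    (g : (i : Fin r) → Equiv.Perm (Fin (n i))) (i : Fin r) (j : Fin (n i)) :
    blockPermHom n N e g (e ⟨i, j⟩) = e ⟨i, g i j⟩ := by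
  simp [blockPermHom]

theorem log_map_prod_zpow {F ι : Type*} [Field F] (w : F →*₀ ℤᵐ⁰) (S : Finset ι) (a : ι → Fˣ)
    (d : ι → ℤ) :
    WithZero.log (w ((∏ i ∈ S, a i ^ d i : Fˣ) : F)) =
      ∑ i ∈ S, d i * WithZero.log (w (a i : F)) := by
  classical
  induction S using Finset.induction_on with
  | empty => simp
  | insert i S hi ih =>
    rw [Finset.prod_insert hi, Finset.sum_insert hi, ← ih, Units.val_mul, map_mul,
      WithZero.log_mul ((map_ne_zero w).2 (Units.ne_zero _)) ((map_ne_zero w).2 (Units.ne_zero _)),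
      Units.val_zpow_eq_zpow_val, map_zpow₀, WithZero.log_zpow, smul_eq_mul]

/-- If `∑ d i * v i` is divisible by `p`, where `v i₀ ≡ 1` and all other `v i ≡ 0` modulo `p`,
then `d i₀` is divisible by `p`. -/
theorem dvd_of_sum_mul_eq {ι : Type*} (S : Finset ι) {i₀ : ι} (hi₀ : i₀ ∈ S) (p : ℕ)
    (d v : ι → ℤ) (u : ℤ) (h₀ : v i₀ ≡ 1 [ZMOD p]) (h : ∀ i ∈ S, i ≠ i₀ → (p : ℤ) ∣ v i)
    (hsum : ∑ i ∈ S, d i * v i = p * u) : (p : ℤ) ∣ d i₀ := by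
  classical
  rw [← Finset.add_sum_erase _ _ hi₀] at hsum
  have h1 : (p : ℤ) ∣ ∑ i ∈ S.erase i₀, d i * v i :=
    Finset.dvd_sum fun i hi =>
      (h i (Finset.mem_of_mem_erase hi) (Finset.ne_of_mem_erase hi)).mul_left _
  have h2 : (p : ℤ) ∣ d i₀ * v i₀ := (Int.dvd_add_left h1).1 (hsum ▸ dvd_mul_right _ _)
  have h3 : (p : ℤ) ∣ d i₀ * (1 - v i₀) := h₀.dvd.mul_left _
  simpa [mul_sub] using dvd_add h2 h3

/-- In the block situation (`L = k(x₁,…,x_N)`,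
`G = S_{n₁} × ⋯ × S_{n_r}` acting by permuting the variables in consecutive
blocks of sizes `n₁,…,n_r`, `K = L^G`, `L_i = K(x_{m_i})` with
`m_i = n₁ + ⋯ + n_{i-1} + 1`), set `s₁ = x₁ + ⋯ + x_N ∈ K`.  Let `p` be a
prime, let `1 ≤ s ≤ r` be such that `p` divides `n₁,…,n_s`, and let
`d₁,…,d_s` be integers with `d₁` not divisible by `p`.  Then there do not
exist elements `a₁,…,a_r ∈ Kˣ` and `b₁ ∈ L₁ˣ, …, b_r ∈ L_rˣ` such that
`a₁ = s₁ · N_{L₁/K}(b₁)`, `a_i = N_{L_i/K}(b_i)` for all `2 ≤ i ≤ r`, and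
`a₁^{d₁} ⋯ a_s^{d_s} ∈ (Kˣ)^p`. -/
theorem block_norm_class_not_p_th_power (k : Type*) [Field k]
    (r : ℕ) (hr : 1 ≤ r) (n : Fin r → ℕ) (hn : ∀ i, 1 ≤ n i)
    (N : ℕ) (hN : N = ∑ i, n i)
    (e : ((i : Fin r) × Fin (n i)) ≃ Fin N)
    (he : ∀ (i : Fin r) (j : Fin (n i)), ((e ⟨i, j⟩ : Fin N) : ℕ) = blockStart n i + (j : ℕ))
    (ρ : Equiv.Perm (Fin N) →*
      (FractionRing (MvPolynomial (Fin N) k) ≃ₐ[k] FractionRing (MvPolynomial (Fin N) k)))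
    (hρ : ∀ (π : Equiv.Perm (Fin N)) (j : Fin N),
      ρ π (algebraMap (MvPolynomial (Fin N) k) (FractionRing (MvPolynomial (Fin N) k))
          (MvPolynomial.X j)) =
        algebraMap (MvPolynomial (Fin N) k) (FractionRing (MvPolynomial (Fin N) k))
          (MvPolynomial.X (π j)))
    (p : ℕ) (hp : p.Prime) (s : ℕ) (hs : 1 ≤ s) (hsr : s ≤ r)
    (hdvd : ∀ i : Fin r, (i : ℕ) < s → p ∣ n i)
    (dd : Fin r → ℤ) (hd1 : ¬ (p : ℤ) ∣ dd ⟨0, lt_of_lt_of_le hs hsr⟩) :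
    let L := FractionRing (MvPolynomial (Fin N) k)
    let G : Subgroup (L ≃ₐ[k] L) := (ρ.comp (blockPermHom n N e)).range
    let K : IntermediateField k L := IntermediateField.fixedField G
    let Li : Fin r → IntermediateField K L := fun i => IntermediateField.adjoin K
      {algebraMap (MvPolynomial (Fin N) k) L (MvPolynomial.X (e ⟨i, ⟨0, hn i⟩⟩))}
    let s₁ : L := algebraMap (MvPolynomial (Fin N) k) L (∑ j : Fin N, MvPolynomial.X j)
    let i₀ : Fin r := ⟨0, lt_of_lt_of_le hs hsr⟩
    ¬ ∃ (a : Fin r → (↥K)ˣ) (b : (i : Fin r) → (↥(Li i))ˣ),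
        ((a i₀ : ↥K) : L) = s₁ * ((Algebra.norm K ((b i₀ : ↥(Li i₀))) : ↥K) : L) ∧
        (∀ i : Fin r, i ≠ i₀ →
          ((a i : ↥K) : L) = ((Algebra.norm K ((b i : ↥(Li i))) : ↥K) : L)) ∧
        ∃ c : (↥K)ˣ,
          (∏ i ∈ Finset.univ.filter (fun i : Fin r => (i : ℕ) < s), a i ^ dd i) = c ^ p := by
  classical
  intro L G K Li s₁ i₀
  let X' : Fin N → L := fun j => algebraMap (MvPolynomial (Fin N) k) L (MvPolynomial.X j)
  have : Finite G := Set.finite_range (ρ.comp (blockPermHom n N e))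
  have hfd : FiniteDimensional K L :=
    inferInstanceAs (FiniteDimensional (FixedPoints.subfield G L) L)
  have hgal : IsGalois K L := IsGalois.of_fixed_field L G
  have hσ (σ : L ≃ₐ[K] L) : ∃ g, ∀ x, σ x = ρ (blockPermHom n N e g) x := by
    obtain ⟨⟨_, g, rfl⟩, hg⟩ := FixedPoints.toAlgAut_surjective G L σ
    exact ⟨g, fun x => by rw [← hg]; rfl⟩
  have hg (g : (i : Fin r) → Equiv.Perm (Fin (n i))) :
      ∃ σ : L ≃ₐ[K] L, ∀ x, σ x = ρ (blockPermHom n N e g) x :=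
    ⟨MulSemiringAction.toAlgAut G (FixedPoints.subfield G L) L ⟨_, g, rfl⟩, fun _ => rfl⟩
  have hrank (i : Fin r) : Module.finrank K (Li i) = n i := by
    have hint : IsIntegral K (X' (e ⟨i, ⟨0, hn i⟩⟩)) := Algebra.IsIntegral.isIntegral _
    have hinj : Function.Injective fun j : Fin (n i) => X' (e ⟨i, j⟩) := by
      intro j j' h
      have := e.injective
        (MvPolynomial.X_injective (IsFractionRing.injective (MvPolynomial (Fin N) k) L h))
      simpa using this
    have hroots : (minpoly K (X' (e ⟨i, ⟨0, hn i⟩⟩))).rootSet L =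
        Set.range fun j : Fin (n i) => X' (e ⟨i, j⟩) := by
      ext y
      rw [Polynomial.mem_rootSet_of_ne (minpoly.ne_zero hint)]
      constructor
      · intro hy
        obtain ⟨σ, rfl⟩ := minpoly.exists_algEquiv_of_root' (Algebra.IsAlgebraic.isAlgebraic _) hy
        obtain ⟨g, hg⟩ := hσ σ
        exact ⟨g i ⟨0, hn i⟩, by rw [hg, hρ, blockPermHom_apply]⟩
      · rintro ⟨j, rfl⟩
        obtain ⟨σ, hσ⟩ := hg (Function.update 1 i (Equiv.swap ⟨0, hn i⟩ j))
        have : X' (e ⟨i, j⟩) = σ (X' (e ⟨i, ⟨0, hn i⟩⟩)) := by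
          rw [hσ, hρ, blockPermHom_apply, Function.update_self, Equiv.swap_apply_left]
        dsimp only
        rw [this, Polynomial.aeval_algHom_apply, minpoly.aeval, map_zero]
    rw [IntermediateField.adjoin.finrank hint,
      ← Polynomial.card_rootSet_eq_natDegree (Algebra.IsSeparable.isSeparable K _)
        (Normal.splits inferInstance _), ← Nat.card_eq_fintype_card, hroots,
      Nat.card_range_of_injective hinj, Nat.card_fin]
  have : Nonempty (Fin N) := ⟨e ⟨i₀, ⟨0, hn i₀⟩⟩⟩
  have hP := MvPolynomial.prime_sum_X (σ := Fin N) (k := k)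
  obtain ⟨w, hw⟩ := exists_fractionRing_hom_extending_multiplicity hP
  have hwσ (σ : L ≃ₐ[K] L) (x : L) : w (σ x) = w x := by
    obtain ⟨g, hg⟩ := hσ σ
    rw [hg]
    refine map_perm_eq_of_prime hP w hw _ ?_ _ (hρ _) x
    simpa using Equiv.sum_comp (blockPermHom n N e g) (MvPolynomial.X (R := k))
  have hnorm (i : Fin r) (b : Li i) :
      w ((Algebra.norm K b : K) : L) = w (b : L) ^ n i := by
    rw [← hrank i]
    exact map_norm_intermediateField_eq_pow w hwσ (Li i) b
  rintro ⟨a, b, h₀, h, c, hc⟩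
  have hb (i : Fin r) : w (b i : L) ≠ 0 := by simp
  have hws : w s₁ = WithZero.exp 1 := (hw _).trans (primeMultiplicityHom_self hP)
  refine hd1 (dvd_of_sum_mul_eq (Finset.univ.filter fun i : Fin r => (i : ℕ) < s)
    (i₀ := i₀) (by simp [i₀]; omega) p dd (fun i => WithZero.log (w ((a i : K) : L)))
    (WithZero.log (w ((c : K) : L))) ?_ ?_ ?_)
  · have hdiv : (p : ℤ) ∣ n i₀ := Int.natCast_dvd_natCast.2 (hdvd i₀ hs)
    rw [h₀, map_mul, hws, hnorm, WithZero.log_mul WithZero.exp_ne_zero (pow_ne_zero _ (hb _)),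
      WithZero.log_exp, WithZero.log_pow, nsmul_eq_mul]
    exact Int.modEq_iff_dvd.2 (by simpa using hdiv.mul_right _)
  · intro i hi hne
    have hdiv : (p : ℤ) ∣ n i := Int.natCast_dvd_natCast.2 (hdvd i (by simpa using hi))
    rw [h i hne, hnorm, WithZero.log_pow, nsmul_eq_mul]
    exact hdiv.mul_right _
  · have hprod := log_map_prod_zpow (w.comp (algebraMap K L).toMonoidWithZeroHom)
      (Finset.univ.filter fun i : Fin r => (i : ℕ) < s) a dd
    rw [hc, Units.val_pow_eq_pow_val, map_pow, WithZero.log_pow, nsmul_eq_mul] at hprod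
    exact hprod.symm
end

section
/- Let k be a field, K a separable field extension of k with [K:k] = 2, and D a finite-dimensional central division algebra over K with dim_K D = r². Suppose σ : D → D is an involution of the second kind: σ is additive, satisfies σ(xy) = σ(y)σ(x) for all x, y ∈ D and σ(σ(x)) = x for all x ∈ D, maps K to K, fixes k pointwise, and does not fix K pointwise. Then there exists a finite separable field extension F of k such that L := K ⊗_k F is a field and the L-algebra D ⊗_K L is isomorphic to the matrix algebra M_r(L) of r × r matrices over L. -/
open scoped TensorProduct

attribute [local instance] Algebra.TensorProduct.rightAlgebra

/-- The double commutant property of a subalgebra of endomorphisms acting irreducibly. -/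
theorem Subalgebra.mem_of_forall_commute_of_isSimpleModule {K M : Type*} [Field K]
    [AddCommGroup M] [Module K M] [FiniteDimensional K M] (A : Subalgebra K (Module.End K M))
    [IsSimpleModule A M] (f : Module.End K M)
    (hf : ∀ g : Module.End K M, (∀ a ∈ A, Commute g a) → Commute f g) : f ∈ A := by
  let f' : Module.End (Module.End A M) M :=
    { toFun := f
      map_add' := map_add f
      map_smul' := fun g x ↦ by
        let g' : Module.End K M :=
          { toFun := g
            map_add' := map_add g
            map_smul' := fun c x ↦ by
              exact map_smul g (algebraMap K A c) x }
        have hg : ∀ a ∈ A, Commute g' a := fun a ha ↦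
          LinearMap.ext fun x ↦ map_smul g (⟨a, ha⟩ : A) x
        exact LinearMap.congr_fun (hf g' hg) x }
  let b := Module.finBasis K M
  classical
  obtain ⟨a, ha⟩ := jacobson_density (R := A) f' (Finset.univ.image b)
  have : f = a := b.ext fun i ↦ ha (b i) (by simp)
  exact this ▸ a.2

section Sandwich

variable {K D B : Type*} [Field K] [DivisionRing D] [Algebra K D] [Ring B] [Algebra K B]

/-- The action of `D ⊗ B` on `D` by left multiplication by `D` and right multiplication by
the image of `B`. -/
noncomputable def AlgHom.sandwich (φ : B →ₐ[K] Dᵐᵒᵖ) : D ⊗[K] B →ₐ[K] Module.End K D :=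
  (AlgHom.mulLeftRight K D).comp (Algebra.TensorProduct.map (AlgHom.id K D) φ)

@[simp]
theorem AlgHom.sandwich_tmul (φ : B →ₐ[K] Dᵐᵒᵖ) (d : D) (b : B) (x : D) :
    φ.sandwich (d ⊗ₜ b) x = d * x * (φ b).unop := by
  simp [AlgHom.sandwich]

instance AlgHom.isSimpleModule_range_sandwich (φ : B →ₐ[K] Dᵐᵒᵖ) :
    IsSimpleModule φ.sandwich.range D :=
  isSimpleModule_iff_toSpanSingleton_surjective.mpr ⟨inferInstance, fun x hx y ↦
    ⟨⟨φ.sandwich ((y * x⁻¹) ⊗ₜ 1), ⟨_, rfl⟩⟩, by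
      simp [Subalgebra.smul_def, hx]⟩⟩

/-- An endomorphism of `D` commuting with right multiplication by the centralizer of the image
of `B` comes from `D ⊗ B`. -/
theorem AlgHom.mem_range_sandwich [FiniteDimensional K D] (φ : B →ₐ[K] Dᵐᵒᵖ)
    (f : Module.End K D)
    (hf : ∀ c : D, (∀ b, Commute c (φ b).unop) → ∀ x, f (x * c) = f x * c) :
    f ∈ φ.sandwich.range := by
  refine Subalgebra.mem_of_forall_commute_of_isSimpleModule _ f fun g hg ↦ ?_
  have hmem (t) : Commute g (φ.sandwich t) := hg _ ⟨t, rfl⟩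
  have hg1 (x : D) : g x = x * g 1 := by
    simpa using LinearMap.congr_fun (hmem (x ⊗ₜ 1)) 1
  have hc (b) : Commute (g 1) (φ b).unop := by
    have := LinearMap.congr_fun (hmem (1 ⊗ₜ b)) 1
    simp only [Module.End.mul_apply, sandwich_tmul, mul_one, one_mul] at this
    rw [hg1] at this
    exact this.symm
  refine LinearMap.ext fun x ↦ ?_
  simp only [Module.End.mul_apply]
  rw [hg1 x, hg1 (f x), hf _ hc]

variable [FiniteDimensional K D] [Algebra.IsCentral K D]

theorem AlgHom.mulLeftRight_bijective_of_isCentral :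
    Function.Bijective (AlgHom.mulLeftRight K D) := by
  have hsurj : Function.Surjective (AlgHom.mulLeftRight K D) := fun f ↦ by
    obtain ⟨t, ht⟩ := (AlgHom.id K Dᵐᵒᵖ).mem_range_sandwich f fun c hc x ↦ by
      obtain ⟨a, rfl⟩ := Algebra.mem_bot.mp (Algebra.IsCentral.out (K := K)
        (Subalgebra.mem_center_iff.mpr fun b ↦ (hc (.op b)).symm.eq))
      rw [← Algebra.commutes, ← Algebra.smul_def, map_smul, ← Algebra.commutes,
        ← Algebra.smul_def]
    refine ⟨t, ?_⟩
    rw [← ht]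
    simp [AlgHom.sandwich]
  refine ⟨?_, hsurj⟩
  refine (LinearMap.injective_iff_surjective_of_finrank_eq_finrank
    (f := (AlgHom.mulLeftRight K D).toLinearMap) ?_).mpr hsurj
  rw [Module.finrank_tensorProduct, Module.finrank_linearMap,
    (MulOpposite.opLinearEquiv K : D ≃ₗ[K] Dᵐᵒᵖ).finrank_eq]

theorem AlgHom.sandwich_injective (φ : B →ₐ[K] Dᵐᵒᵖ) (hφ : Function.Injective φ) :
    Function.Injective φ.sandwich := by
  refine (AlgHom.mulLeftRight_bijective_of_isCentral (K := K)).injective.comp ?_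
  exact Module.Flat.lTensor_preserves_injective_linearMap (M := D) φ.toLinearMap hφ

/-- The double centralizer theorem for a subalgebra of a central division algebra. -/
theorem AlgHom.mem_range_of_forall_commute (φ : B →ₐ[K] Dᵐᵒᵖ) (z : D)
    (hz : ∀ c : D, (∀ b, Commute c (φ b).unop) → Commute z c) : .op z ∈ φ.range := by
  obtain ⟨t, ht⟩ := φ.mem_range_sandwich (LinearMap.mulRight K z) fun c hc x ↦ by
    simp [mul_assoc, (hz c hc).eq]
  have ht' : Algebra.TensorProduct.map (AlgHom.id K D) φ t = 1 ⊗ₜ .op z := by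
    refine (AlgHom.mulLeftRight_bijective_of_isCentral (K := K)).injective (ht.trans ?_)
    ext x
    simp
  by_contra hmem
  obtain ⟨f, hf, hle⟩ := Submodule.exists_le_ker_of_notMem
    (show MulOpposite.op z ∉ φ.range.toSubmodule from hmem)
  have h0 : (f.lTensor D).comp (Algebra.TensorProduct.map (AlgHom.id K D) φ).toLinearMap = 0 :=
    TensorProduct.ext' fun x y ↦ by
      have : f (φ y) = 0 := hle ⟨y, rfl⟩
      simp [this]
  replace h0 := LinearMap.congr_fun h0 t
  rw [LinearMap.comp_apply, AlgHom.toLinearMap_apply, ht', LinearMap.lTensor_tmul] at h0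
  have := congr(TensorProduct.rid K D $h0)
  simp [hf] at this

end Sandwich

theorem IsField.moduleFree {R : Type*} [CommRing R] (hR : IsField R) (M : Type*)
    [AddCommGroup M] [Module R M] : Module.Free R M := by
  let := hR.toField
  exact Module.Free.of_divisionRing R M

theorem IsField.injective_ringHom {R A : Type*} [CommRing R] (hR : IsField R) [Ring A]
    [Nontrivial A] (f : R →+* A) : Function.Injective f := by
  let := hR.toField
  exact f.injective

section Splitting

variable {K D S : Type*} [Field K] [DivisionRing D] [Algebra K D] [FiniteDimensional K D]
  [CommRing S] [Algebra K S]

theorem finrank_eq_of_algEquiv_end (hS : IsField S) [Module.Finite K S] [Module S D]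
    [IsScalarTower K S D] (e : D ⊗[K] S ≃ₐ[S] Module.End S D) {r : ℕ}
    (hr : Module.finrank K D = r ^ 2) : Module.finrank S D = r := by
  have := hS.nontrivial
  have := hS.isDomain
  have := hS.moduleFree D
  have := Module.Finite.of_restrictScalars_finite K S D
  have h := (e.restrictScalars K).toLinearEquiv.finrank_eq
  rw [Module.finrank_tensorProduct, ← Module.finrank_mul_finrank K S (Module.End S D),
    Module.finrank_linearMap, mul_comm, hr] at h
  have h' := Nat.eq_of_mul_eq_mul_left (Module.finrank_pos (R := K) (M := S)) h
  rw [← sq] at h'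
  exact (Nat.pow_left_injective two_ne_zero h').symm

variable [Algebra.IsCentral K D]

/-- The double centralizer theorem for a commutative subalgebra of a central division algebra. -/
theorem AlgHom.mem_range_of_forall_commute_of_comm (ψ : S →ₐ[K] D) (z : D)
    (hz : ∀ c : D, (∀ s, Commute c (ψ s)) → Commute z c) : z ∈ ψ.range := by
  obtain ⟨s, hs⟩ := (ψ.toOpposite fun x y ↦ (Commute.all x y).map ψ).mem_range_of_forall_commute
    z hz
  exact ⟨s, congr(($hs).unop)⟩

/-- Let `S` act on `D` by right multiplication through `ψ`. If the image of `ψ` is a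
self-centralizing subfield of `D`, then `D ⊗ S` is the full algebra of `S`-linear endomorphisms. -/
theorem nonempty_algEquiv_end_of_selfCentralizing [Module S D] [IsScalarTower K S D]
    (ψ : S →ₐ[K] D) (hinj : Function.Injective ψ) (smul_eq : ∀ (s : S) (d : D), s • d = d * ψ s)
    (hψ : ∀ c : D, (∀ s, Commute c (ψ s)) → c ∈ ψ.range) :
    Nonempty (D ⊗[K] S ≃ₐ[S] Module.End S D) := by
  let φ : S →ₐ[K] Dᵐᵒᵖ := ψ.toOpposite fun x y ↦ (Commute.all x y).map ψ
  have hφ (s : S) : (φ s).unop = ψ s := rfl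
  have hlin (t : D ⊗[K] S) (s : S) (d : D) : φ.sandwich t (s • d) = s • φ.sandwich t d := by
    induction t with
    | zero => simp
    | add x y hx hy => simp [hx, hy]
    | tmul x y =>
      simp [smul_eq, hφ, mul_assoc, ← map_mul, mul_comm]
  let Θ : D ⊗[K] S →ₐ[S] Module.End S D :=
    { toFun := fun t ↦ { φ.sandwich t with map_smul' := hlin t }
      map_one' := by ext; simp
      map_mul' := fun x y ↦ by ext; simp
      map_zero' := by ext; simp
      map_add' := fun x y ↦ by ext; simp
      commutes' := fun s ↦ by
        ext d
        simp [Algebra.TensorProduct.right_algebraMap_apply, smul_eq, hφ] }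
  have hΘ : Function.Bijective Θ := by
    refine ⟨fun x y hxy ↦ φ.sandwich_injective (fun a b h ↦ hinj congr(($h).unop)) ?_, fun f ↦ ?_⟩
    · ext d
      exact LinearMap.congr_fun hxy d
    · obtain ⟨t, ht⟩ := φ.mem_range_sandwich (f.restrictScalars K) fun c hc x ↦ by
        obtain ⟨s, rfl⟩ := hψ c hc
        simpa only [smul_eq] using! map_smul f s x
      exact ⟨t, LinearMap.ext fun d ↦ LinearMap.congr_fun ht d⟩
  exact ⟨AlgEquiv.ofBijective Θ hΘ⟩

/-- A self-centralizing subfield of a central division algebra is a splitting field. -/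
theorem nonempty_algEquiv_matrix_of_selfCentralizing (hS : IsField S) (ψ : S →ₐ[K] D)
    (hψ : ∀ c : D, (∀ s, Commute c (ψ s)) → c ∈ ψ.range) {r : ℕ}
    (hr : Module.finrank K D = r ^ 2) :
    Nonempty (D ⊗[K] S ≃ₐ[S] Matrix (Fin r) (Fin r) S) := by
  have hinj : Function.Injective ψ := hS.injective_ringHom ψ.toRingHom
  have := hS.nontrivial
  have : Module.Finite K S := Module.Finite.of_injective ψ.toLinearMap hinj
  let : Module S D := Module.compHom D
    (ψ.toOpposite fun x y ↦ (Commute.all x y).map ψ : S →ₐ[K] Dᵐᵒᵖ).toRingHom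
  have smul_eq (s : S) (d : D) : s • d = d * ψ s := rfl
  have : IsScalarTower K S D := ⟨fun c s d ↦ by simp [smul_eq]⟩
  have : Module.Finite S D := Module.Finite.of_restrictScalars_finite K S D
  have := hS.moduleFree D
  obtain ⟨e⟩ := nonempty_algEquiv_end_of_selfCentralizing ψ hinj smul_eq hψ
  exact ⟨e.trans (LinearMap.toMatrixAlgEquiv
    (Module.finBasisOfFinrankEq S D (finrank_eq_of_algEquiv_end hS e hr)))⟩

end Splitting

open Polynomial in
/-- If the values of a polynomial at all scalars lie in a subspace, so do its coefficients. -/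
theorem Polynomial.coeff_mem_of_forall_eval_mem {F E : Type*} [Field F] [Infinite F] [Ring E]
    [Algebra F E] (W : Submodule F E) (p : E[X])
    (hp : ∀ x : F, p.eval (algebraMap F E x) ∈ W) (i : ℕ) : p.coeff i ∈ W := by
  by_contra hi
  obtain ⟨f, hf, hle⟩ := Submodule.exists_le_ker_of_notMem hi
  let q : F[X] := ∑ j ∈ p.support, monomial j (f (p.coeff j))
  have hq : q = 0 := Polynomial.funext fun x ↦ by
    have h : f (p.eval (algebraMap F E x)) = 0 := hle (hp x)
    rw [eval_eq_sum, Polynomial.sum, map_sum] at h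
    rw [eval_finsetSum, eval_zero, ← h]
    refine Finset.sum_congr rfl fun j _ ↦ ?_
    rw [eval_monomial, ← map_pow, ← Algebra.commutes, ← Algebra.smul_def, map_smul, smul_eq_mul,
      mul_comm]
  have h := congr(($hq).coeff i)
  simp only [q, finsetSum_coeff, coeff_monomial, coeff_zero, Finset.sum_ite_eq', mem_support_iff]
    at h
  have h0 : p.coeff i ≠ 0 := fun h0 ↦ hi (h0 ▸ W.zero_mem)
  rw [if_pos (mem_support_iff.mpr h0)] at h
  exact hf h

open Polynomial in
theorem add_mul_pow_mem_center_of_forall {F E : Type*} [Field F] [Infinite F] [Ring E]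
    [Algebra F E] {s t z : E} (hz : z ∈ Subring.center E) (n : ℕ)
    (h : ∀ x : F, (s + t * algebraMap F E x) ^ n ∈ (⊥ : Subalgebra F E)) :
    (s + t * z) ^ n ∈ Subring.center E := by
  let ev (y : E) (hy : y ∈ Subring.center E) : E[X] →+* E :=
    eval₂RingHom' (RingHom.id E) y fun a ↦ Subring.mem_center_iff.mp hy a
  have hev (y hy) : ev y hy ((C s + C t * X) ^ n) = (s + t * y) ^ n := by
    have hX : ev y hy X = y := eval₂_X _ _
    have hC (a : E) : ev y hy (C a) = a := eval₂_C _ _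
    rw [map_pow, map_add, map_mul, hX, hC, hC]
  have hcoeff := Polynomial.coeff_mem_of_forall_eval_mem
    (Subalgebra.toSubmodule (⊥ : Subalgebra F E)) ((C s + C t * X) ^ n) fun x ↦ by
      have := hev (algebraMap F E x) (Subring.mem_center_iff.mpr
        fun a ↦ (Algebra.commutes x a).symm)
      change eval₂ (RingHom.id E) _ _ = _ at this
      rw [eval, this]
      exact h x
  rw [← hev z hz]
  change eval₂ (RingHom.id E) _ _ ∈ _
  rw [eval₂_eq_sum, Polynomial.sum]
  refine Subring.sum_mem _ fun i _ ↦ Subring.mul_mem _ ?_ (Subring.pow_mem _ hz i)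
  obtain ⟨a, ha⟩ := Algebra.mem_bot.mp (hcoeff i)
  rw [RingHom.id_apply, ← ha]
  exact Subring.mem_center_iff.mpr fun b ↦ (Algebra.commutes a b).symm

/-- A power of `s` with exponent bounded independently of `s` is separable. -/
theorem exists_le_finrank_isSeparable_pow {F E : Type*} [Field F] [DivisionRing E]
    [Algebra F E] [FiniteDimensional F E] (q : ℕ) [ExpChar F q] (s : E) :
    ∃ m ≤ Module.finrank F E, IsSeparable F (s ^ q ^ m) := by
  have hs : IsIntegral F s := .of_finite F s
  obtain ⟨g, hg, m, hm⟩ := (minpoly.irreducible hs).hasSeparableContraction q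
  have hsep : IsSeparable F (s ^ q ^ m) := hg.of_dvd <| minpoly.dvd F _ <| by
    simpa only [Polynomial.expand_aeval, minpoly.aeval] using congr_arg (Polynomial.aeval s) hm
  obtain rfl | hq := (show 1 ≤ q from expChar_pos F q).eq_or_lt
  · exact ⟨0, Nat.zero_le _, by simpa using hsep⟩
  · refine ⟨m, (Nat.lt_pow_self hq).le.trans (le_trans ?_ (minpoly.natDegree_le s)), hsep⟩
    rw [← hm, Polynomial.natDegree_expand]
    refine Nat.le_mul_of_pos_left _ (Nat.pos_of_ne_zero fun h0 ↦ ?_)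
    have := minpoly.natDegree_pos hs
    rw [← hm, Polynomial.natDegree_expand, h0, zero_mul] at this
    exact this.false

theorem map_pow_eq_of_map_mul_rev {E : Type*} [Monoid E] (τ : E → E)
    (hmul : ∀ x y, τ (x * y) = τ y * τ x) (hinv : ∀ x, τ (τ x) = x) {s : E} (hs : τ s = s)
    (m : ℕ) : τ (s ^ m) = s ^ m := by
  induction m with
  | zero =>
    have h1 := hmul (τ 1) 1
    rw [mul_one, hinv, mul_one] at h1
    simpa using h1.symm
  | succ m ih => rw [pow_succ, hmul, hs, ih, ← pow_succ, ← pow_succ']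

/-- In a noncommutative division algebra with an involution that is nontrivial on the center, some
symmetric element outside the base field is separable over it. -/
theorem exists_isSeparable_symmetric_of_center_ne_top {F E : Type*} [Field F] [DivisionRing E]
    [Algebra F E] [FiniteDimensional F E] (τ : E →ₗ[F] E) (hmul : ∀ x y, τ (x * y) = τ y * τ x)
    (hinv : ∀ x, τ (τ x) = x) {z : E} (hz : z ∈ Subring.center E) (hτz : τ z ∈ Subring.center E)
    (hne : τ z ≠ z) (hE : Subring.center E ≠ ⊤) :
    ∃ s : E, τ s = s ∧ IsSeparable F s ∧ s ∉ (⊥ : Subalgebra F E) := by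
  by_contra! hsymm
  have : Infinite F := by
    by_contra hfin
    rw [not_infinite_iff_finite] at hfin
    have : Finite E := Module.finite_of_finite F
    let := littleWedderburn E
    exact hE (eq_top_iff.mpr fun x _ ↦ Subring.mem_center_iff.mpr fun y ↦ mul_comm y x)
  obtain ⟨q, _⟩ := ExpChar.exists F
  set n := Module.finrank F E
  have hbot (s : E) (hs : τ s = s) : s ^ q ^ n ∈ (⊥ : Subalgebra F E) := by
    obtain ⟨m, hmn, hm⟩ := exists_le_finrank_isSeparable_pow (F := F) q s
    rw [show n = m + (n - m) from (Nat.add_sub_cancel' hmn).symm, pow_add, pow_mul]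
    exact Subalgebra.pow_mem _ (hsymm _ (map_pow_eq_of_map_mul_rev τ hmul hinv hs _) hm) _
  have hcen (x : E) : x ^ q ^ n ∈ Subring.center E := by
    have hw : z - τ z ∈ Subring.center E := Subring.sub_mem _ hz hτz
    have hw0 : z - τ z ≠ 0 := sub_ne_zero.mpr hne.symm
    have hzc (a : E) : a * z = z * a := Subring.mem_center_iff.mp hz a
    have hτzc (a : E) : a * τ z = τ z * a := Subring.mem_center_iff.mp hτz a
    have hwc (a : E) : a * (z - τ z) = (z - τ z) * a := Subring.mem_center_iff.mp hw a
    obtain ⟨t, ht⟩ : ∃ t, t * (z - τ z) = x - τ x := ⟨(x - τ x) * (z - τ z)⁻¹, by simp [hw0]⟩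
    have hτt : τ t = t := by
      refine mul_right_cancel₀ hw0 ?_
      have := congr(τ $ht)
      rw [hmul, map_sub, map_sub, hinv, hinv] at this
      rw [ht, hwc, ← neg_sub (τ z) z, neg_mul, this, neg_sub]
    have hτs : τ (x - t * z) = x - t * z := by
      rw [map_sub, hmul, hτt, ← hτzc]
      rw [mul_sub] at ht
      rw [sub_eq_sub_iff_sub_eq_sub, ← neg_sub x, ← ht, neg_sub]
    have := add_mul_pow_mem_center_of_forall (F := F) (s := x - t * z) (t := t) hz (q ^ n)
      fun c ↦ hbot _ (by
        rw [← Algebra.commutes, ← Algebra.smul_def, map_add, hτs, map_smul, hτt])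
    simpa using this
  have : ExpChar E q := expChar_of_injective_algebraMap (algebraMap F E).injective q
  have : ExpChar (Subring.center E) q := (ExpChar.expChar_center_iff (R := E)).mpr this
  have : IsPurelyInseparable (Subring.center E) E :=
    (isPurelyInseparable_iff_pow_mem (Subring.center E) q).mpr fun x ↦ ⟨n, ⟨_, hcen x⟩, rfl⟩
  obtain ⟨x, hx, hsep⟩ := JacobsonNoether.exists_separable_and_not_isCentral E hE
  obtain ⟨y, rfl⟩ := IsPurelyInseparable.inseparable _ x hsep
  exact hx y.2

/-- A separable symmetric element generates a separable field extension all of whose elements are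
symmetric. -/
theorem exists_extension_of_isSeparable_symmetric {F : Type u} {E : Type*} [Field F]
    [DivisionRing E] [Algebra F E] (τ : E →ₗ[F] E) (hmul : ∀ x y, τ (x * y) = τ y * τ x)
    (hinv : ∀ x, τ (τ x) = x) {s : E} (hs : τ s = s) (hsep : IsSeparable F s) :
    ∃ (F' : Type u) (_ : Field F') (_ : Algebra F F') (φ : F' →ₐ[F] E),
      FiniteDimensional F F' ∧ Algebra.IsSeparable F F' ∧ (∀ x, τ (φ x) = φ x) ∧ s ∈ φ.range := by
  have hint : IsIntegral F s := hsep.isIntegral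
  have : Fact (Irreducible (minpoly F s)) := ⟨minpoly.irreducible hint⟩
  let φ : AdjoinRoot (minpoly F s) →ₐ[F] E := Ideal.Quotient.liftₐ _ (Polynomial.aeval s) <| by
    intro p hp
    obtain ⟨q, rfl⟩ := Ideal.mem_span_singleton.mp hp
    simp
  have hφ (p : Polynomial F) : φ (AdjoinRoot.mk _ p) = Polynomial.aeval s p := rfl
  have hfin : FiniteDimensional F (AdjoinRoot (minpoly F s)) :=
    (AdjoinRoot.powerBasis (minpoly.ne_zero hint)).finite
  refine ⟨AdjoinRoot (minpoly F s), inferInstance, inferInstance, φ, hfin, ?_, fun x ↦ ?_,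
    AdjoinRoot.root _, ?_⟩
  · have htop : IntermediateField.adjoin F {AdjoinRoot.root (minpoly F s)} = ⊤ :=
      IntermediateField.adjoin_root_eq_top _
    have hroot : IsSeparable F (AdjoinRoot.root (minpoly F s)) :=
      Polynomial.Separable.of_dvd hsep <| minpoly.dvd F _ <| by
        rw [AdjoinRoot.aeval_eq, AdjoinRoot.mk_self]
    rw [← IntermediateField.isSeparable_adjoin_simple_iff_isSeparable, htop] at hroot
    exact .of_algHom F _ IntermediateField.topEquiv.symm.toAlgHom
  · obtain ⟨p, rfl⟩ := AdjoinRoot.mk_surjective x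
    rw [hφ, Polynomial.aeval_eq_sum_range, map_sum]
    refine Finset.sum_congr rfl fun i _ ↦ ?_
    rw [map_smul, map_pow_eq_of_map_mul_rev τ hmul hinv hs]
  · simp [← AdjoinRoot.mk_X, hφ]

section Centralizer

variable {k : Type u} {D : Type*} [Field k] [DivisionRing D] [Algebra k D]
  [FiniteDimensional k D]

/-- A symmetric separable subfield with noncommutative centralizer can be enlarged. -/
theorem exists_larger_symmetric_extension (σ : D →ₗ[k] D)
    (hmul : ∀ x y, σ (x * y) = σ y * σ x) (hinv : ∀ x, σ (σ x) = x) {z : D}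
    (hz : z ∈ Subring.center D) (hσz : σ z ∈ Subring.center D) (hne : σ z ≠ z)
    {F : Type u} [Field F] [Algebra k F] [FiniteDimensional k F] [Algebra.IsSeparable k F]
    (φ : F →ₐ[k] D) (hφ : ∀ x, σ (φ x) = φ x)
    {c d : D} (hc : ∀ x, Commute c (φ x)) (hd : ∀ x, Commute d (φ x)) (hcd : ¬ Commute c d) :
    ∃ (F' : Type u) (_ : Field F') (_ : Algebra k F') (φ' : F' →ₐ[k] D),
      FiniteDimensional k F' ∧ Algebra.IsSeparable k F' ∧ (∀ x, σ (φ' x) = φ' x) ∧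
      Module.finrank k F < Module.finrank k F' := by
  let C : Subalgebra k D := Subalgebra.centralizer k (Set.range φ)
  have hC {x : D} : x ∈ C ↔ ∀ y, Commute x (φ y) := by
    simp only [C, Subalgebra.mem_centralizer_iff, Set.forall_mem_range]
    exact forall_congr' fun _ ↦ eq_comm
  let i : F →+* C := φ.toRingHom.codRestrict C
    fun x ↦ hC.mpr fun y ↦ (Commute.all x y).map φ
  let : Algebra F C := i.toAlgebra' fun a x ↦ Subtype.ext (hC.mp x.2 a).symm.eq
  have coe_algebraMap (a : F) : (algebraMap F C a : D) = φ a := rfl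
  have : IsScalarTower k F C := .of_algebraMap_eq fun a ↦ Subtype.ext (φ.commutes a).symm
  have : FiniteDimensional F C := .right k F C
  let : DivisionRing C := divisionRingOfFiniteDimensional F C
  have coe_smul (a : F) (x : C) : ((a • x : C) : D) = φ a * x := rfl
  let τ : C →ₗ[F] C :=
    { toFun := fun x ↦ ⟨σ x, hC.mpr fun y ↦ by
        have := congr(σ $((hC.mp x.2 y).eq))
        rw [hmul, hmul, hφ] at this
        exact this.symm⟩
      map_add' := fun x y ↦ Subtype.ext (map_add σ _ _)
      map_smul' := fun a x ↦ Subtype.ext <| by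
        have := congr(σ $((hC.mp x.2 a).eq))
        rw [hmul, hmul, hφ] at this
        change σ (φ a * x) = φ a * σ x
        rw [hmul, hφ, ← this] }
  have hcen {x : D} (hx : x ∈ Subring.center D) :
    ∃ h : x ∈ C, (⟨x, h⟩ : C) ∈ Subring.center C :=
    ⟨hC.mpr fun y ↦ (Subring.mem_center_iff.mp hx _).symm,
      Subring.mem_center_iff.mpr fun y ↦ Subtype.ext (Subring.mem_center_iff.mp hx y)⟩
  obtain ⟨s, hs, hsep, hmem⟩ := exists_isSeparable_symmetric_of_center_ne_top τ
    (fun x y ↦ Subtype.ext (hmul x y)) (fun x ↦ Subtype.ext (hinv x)) (hcen hz).2 (hcen hσz).2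
    (fun h ↦ hne (congrArg Subtype.val h)) (fun htop ↦ hcd (by
      have : (⟨d, hC.mpr hd⟩ : C) ∈ Subring.center C := htop ▸ Subring.mem_top _
      exact congrArg Subtype.val (Subring.mem_center_iff.mp this ⟨c, hC.mpr hc⟩)))
  obtain ⟨F', _, _, φ', hfin, hsepF', hφ', x, rfl⟩ := exists_extension_of_isSeparable_symmetric τ
    (fun x y ↦ Subtype.ext (hmul x y)) (fun x ↦ Subtype.ext (hinv x)) hs hsep
  let : Algebra k F' := ((algebraMap F F').comp (algebraMap k F)).toAlgebra
  have : IsScalarTower k F F' := .of_algebraMap_eq fun _ ↦ rfl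
  refine ⟨F', inferInstance, inferInstance, C.val.comp (φ'.restrictScalars k), FiniteDimensional.trans k F F',
    Algebra.IsSeparable.trans k F F', fun x ↦ congrArg Subtype.val (hφ' x), ?_⟩
  rw [← Module.finrank_mul_finrank k F F']
  refine lt_mul_of_one_lt_right Module.finrank_pos ?_
  by_contra! hle
  have hbot : (⊥ : Subalgebra F F') = ⊤ := Subalgebra.bot_eq_top_iff_finrank_eq_one.mpr <|
    hle.antisymm Module.finrank_pos
  obtain ⟨a, rfl⟩ := Algebra.mem_bot.mp (hbot ▸ Algebra.mem_top : x ∈ (⊥ : Subalgebra F F'))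
  exact hmem (Algebra.mem_bot.mpr ⟨a, (φ'.commutes a).symm⟩)

end Centralizer

/-- If `σ` fixes the images of `k` and `F` but not that of `K`, then `K` and `F` are linearly
disjoint over `k`. -/
theorem injective_of_forall_map_eq {k K F D : Type*} [Field k] [Field K] [Algebra k K]
    (hK2 : Module.finrank k K = 2) [Field F] [Algebra k F] [DivisionRing D] [Algebra K D]
    [Algebra k D] [IsScalarTower k K D] (σ : D →ₗ[k] D) (hmul : ∀ x y, σ (x * y) = σ y * σ x)
    (hk : ∀ c, σ (algebraMap k D c) = algebraMap k D c)
    {α β : K} (hαβ : σ (algebraMap K D α) = algebraMap K D β) (hne : α ≠ β)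
    (φ : F →ₐ[k] D) (hφ : ∀ x, σ (φ x) = φ x) (ψ : K ⊗[k] F →ₐ[K] D)
    (hψ : ∀ x a, ψ (x ⊗ₜ a) = algebraMap K D x * φ a) : Function.Injective ψ := by
  have hα : α ∉ (⊥ : Subalgebra k K) := by
    intro h
    obtain ⟨c, rfl⟩ := Algebra.mem_bot.mp h
    rw [← IsScalarTower.algebraMap_apply, hk, IsScalarTower.algebraMap_apply k K D] at hαβ
    exact hne ((algebraMap K D).injective hαβ)
  have hspan (x : K) : ∃ c d : k, x = algebraMap k K c + algebraMap k K d * α := by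
    have hli : LinearIndependent k ![1, α] := by
      rw [LinearIndependent.pair_iff' one_ne_zero]
      exact fun c hc ↦ hα (Algebra.mem_bot.mpr ⟨c, by rw [← hc, Algebra.algebraMap_eq_smul_one]⟩)
    have hmem : x ∈ Submodule.span k (Set.range ![1, α]) := by
      rw [hli.span_eq_top_of_card_eq_finrank (by simp [hK2])]
      trivial
    rw [Matrix.range_cons_cons_empty, Submodule.mem_span_pair] at hmem
    obtain ⟨c, d, rfl⟩ := hmem
    exact ⟨c, d, by simp [Algebra.smul_def]⟩
  have hrep (t : K ⊗[k] F) : ∃ a b : F, t = 1 ⊗ₜ a + α ⊗ₜ b := by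
    induction t with
    | zero => exact ⟨0, 0, by simp⟩
    | add x y hx hy =>
      obtain ⟨a, b, rfl⟩ := hx
      obtain ⟨a', b', rfl⟩ := hy
      exact ⟨a + a', b + b', by simp only [TensorProduct.tmul_add]; abel⟩
    | tmul x y =>
      obtain ⟨c, d, rfl⟩ := hspan x
      exact ⟨c • y, d • y, by
        rw [TensorProduct.add_tmul, Algebra.algebraMap_eq_smul_one, ← Algebra.smul_def,
          TensorProduct.smul_tmul, TensorProduct.smul_tmul]⟩
  rw [injective_iff_map_eq_zero]
  intro t ht
  obtain ⟨a, b, rfl⟩ := hrep t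
  rw [map_add, hψ, hψ, map_one, one_mul] at ht
  have ht' := congr(σ $ht)
  rw [map_add, hmul, hφ, hφ, hαβ, map_zero, ← Algebra.commutes] at ht'
  have hb : algebraMap K D (α - β) * φ b = 0 := by
    rw [map_sub, sub_mul, sub_eq_zero, ← add_right_inj (φ a), ht, ht']
  have hb0 : b = 0 := by
    rcases mul_eq_zero.mp hb with h | h
    · exact absurd ((map_eq_zero _).mp h) (sub_ne_zero.mpr hne)
    · exact (map_eq_zero _).mp h
  subst hb0
  have ha0 : a = 0 := by simpa using ht
  simp [ha0]

/-- A symmetric separable subfield of maximal degree has commutative centralizer. -/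
theorem exists_maximal_symmetric_extension {k : Type u} {D : Type*} [Field k] [DivisionRing D]
    [Algebra k D] [FiniteDimensional k D] (σ : D →ₗ[k] D)
    (hmul : ∀ x y, σ (x * y) = σ y * σ x) (hinv : ∀ x, σ (σ x) = x)
    (hk : ∀ c, σ (algebraMap k D c) = algebraMap k D c) {z : D}
    (hz : z ∈ Subring.center D) (hσz : σ z ∈ Subring.center D) (hne : σ z ≠ z) :
    ∃ (F : Type u) (_ : Field F) (_ : Algebra k F) (φ : F →ₐ[k] D),
      FiniteDimensional k F ∧ Algebra.IsSeparable k F ∧ (∀ x, σ (φ x) = φ x) ∧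
      ∀ c d : D, (∀ x, Commute c (φ x)) → (∀ x, Commute d (φ x)) → Commute c d := by
  let P (n : ℕ) : Prop := ∃ (F : Type u) (_ : Field F) (_ : Algebra k F) (φ : F →ₐ[k] D),
    FiniteDimensional k F ∧ Algebra.IsSeparable k F ∧ (∀ x, σ (φ x) = φ x) ∧
      n = Module.finrank k F
  have hbdd : BddAbove {n | P n} := by
    refine ⟨Module.finrank k D, ?_⟩
    rintro _ ⟨F, _, _, φ, _, _, _, rfl⟩
    exact LinearMap.finrank_le_finrank_of_injective (f := φ.toLinearMap) φ.injective
  have hne' : {n | P n}.Nonempty :=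
    ⟨_, k, inferInstance, inferInstance, Algebra.ofId k D, inferInstance, inferInstance, hk, rfl⟩
  obtain ⟨F, _, _, φ, hfin, hsep, hφ, hmax⟩ := Nat.sSup_mem hne' hbdd
  refine ⟨F, inferInstance, inferInstance, φ, hfin, hsep, hφ, fun c d hc hd ↦ ?_⟩
  by_contra hcd
  obtain ⟨F', _, _, φ', hfin', hsep', hφ', hlt⟩ :=
    exists_larger_symmetric_extension σ hmul hinv hz hσz hne φ hφ hc hd hcd
  exact hlt.not_ge (hmax ▸ le_csSup hbdd ⟨F', _, _, φ', hfin', hsep', hφ', rfl⟩)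

/-- Let `k` be a field, `K` a separable field extension of
`k` with `[K:k] = 2`, and `D` a finite-dimensional central division algebra
over `K` with `dim_K D = r²`.  Suppose `σ : D → D` is an involution of the
second kind: `σ` is additive, satisfies `σ(xy) = σ(y)σ(x)` and `σ(σ(x)) = x`,
maps `K` to `K`, fixes `k` pointwise, and does not fix `K` pointwise.  Then
there exists a finite separable field extension `F` of `k` such that
`L := K ⊗_k F` is a field and the `L`-algebra `D ⊗_K L` is isomorphic to the
matrix algebra `M_r(L)` of `r × r` matrices over `L`. -/
theorem exists_separable_splitting_field_of_involution_second_kind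
    (k : Type u) [Field k] (K : Type u) [Field K] [Algebra k K]
    (hK2 : Module.finrank k K = 2) [Algebra.IsSeparable k K]
    (D : Type u) [DivisionRing D] [Algebra K D] [FiniteDimensional K D]
    [Algebra.IsCentral K D] (r : ℕ) (hr : Module.finrank K D = r ^ 2)
    [Algebra k D] [IsScalarTower k K D]
    (σ : D → D)
    (hadd : ∀ x y : D, σ (x + y) = σ x + σ y)
    (hmul : ∀ x y : D, σ (x * y) = σ y * σ x)
    (hinv : ∀ x : D, σ (σ x) = x)
    (hKK : ∀ x : K, ∃ y : K, σ (algebraMap K D x) = algebraMap K D y)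
    (hk : ∀ c : k, σ (algebraMap k D c) = algebraMap k D c)
    (hsecond : ¬ ∀ x : K, σ (algebraMap K D x) = algebraMap K D x) :
    ∃ (F : Type u) (_ : Field F) (_ : Algebra k F),
      FiniteDimensional k F ∧ Algebra.IsSeparable k F ∧
      IsField (K ⊗[k] F) ∧
      Nonempty ((D ⊗[K] (K ⊗[k] F)) ≃ₐ[K ⊗[k] F] Matrix (Fin r) (Fin r) (K ⊗[k] F)) := by
  have : FiniteDimensional k K := Module.finite_of_finrank_pos (by omega)
  have : FiniteDimensional k D := FiniteDimensional.trans k K D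
  let σₗ : D →ₗ[k] D :=
    { toFun := σ
      map_add' := hadd
      map_smul' := fun c x ↦ by
        rw [Algebra.smul_def, hmul, hk, RingHom.id_apply, Algebra.smul_def, Algebra.commutes] }
  obtain ⟨α, hα⟩ := not_forall.mp hsecond
  obtain ⟨β, hβ⟩ := hKK α
  have hcen (x : K) : algebraMap K D x ∈ Subring.center D :=
    Subring.mem_center_iff.mpr fun y ↦ (Algebra.commutes x y).symm
  obtain ⟨F, _, _, φ, hfin, hsep, hφ, hcomm⟩ := exists_maximal_symmetric_extension σₗ hmul hinv hk
    (hcen α) (hβ ▸ hcen β : σ (algebraMap K D α) ∈ _) hα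
  let ψ : K ⊗[k] F →ₐ[K] D :=
    Algebra.TensorProduct.lift (Algebra.ofId K D) φ fun x a ↦ Algebra.commutes x (φ a)
  have hψ (x : K) (a : F) : ψ (x ⊗ₜ a) = algebraMap K D x * φ a :=
    Algebra.TensorProduct.lift_tmul ..
  have hinj : Function.Injective ψ := injective_of_forall_map_eq hK2 σₗ hmul hk hβ
    (fun h ↦ hα (h ▸ hβ)) φ hφ ψ hψ
  have : IsDomain (K ⊗[k] F) := hinj.isDomain ψ.toRingHom
  have hfield : IsField (K ⊗[k] F) :=
    isField_of_isIntegral_of_isField' (R := K) (Field.toIsField K)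
  refine ⟨F, inferInstance, inferInstance, hfin, hsep, hfield,
    nonempty_algEquiv_matrix_of_selfCentralizing hfield ψ (fun c hc ↦ ?_) hr⟩
  have hφψ {d : D} (hd : ∀ t, Commute d (ψ t)) (a : F) : Commute d (φ a) := by
    simpa [hψ] using hd (1 ⊗ₜ a)
  exact ψ.mem_range_of_forall_commute_of_comm c fun d hd ↦ hcomm c d (hφψ hc) (hφψ hd)
end
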